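/- arXiv:1908.06672 — 2 statements merged into one kernel-verified Lean document; each statement's English description precedes it below -/
import Mathlib

section
/- Let U ∈ ℝ^{N×(k−1)} be a matrix of rank k−1 (2 ≤ k ≤ N) whose first column is 1/√N. If x is a local minimum of the problem of minimizing the ℓ1 variation S over X_U = {x ∈ ℝ^N : U^⊤x = 0, ‖x‖ = 1}, then the components of x take at most k different values. -/
/-!
Suppose `x` takes at least `k + 1` values. The vectors that are constant on the level sets of `x`
form a space of dimension at least `k + 1`, so the `k` linear conditions `Uᵀ y = 0` and `⟨x, y⟩ = 0`
have a common nonzero solution `y` there (`exists_direction`). For small `t` the vector `x + t y`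
has its components in the same order as those of `x`, so `S (x + t y) = S x + t L` is affine in `t`
(`eventually_l1Var_eq`); replacing `y` by `-y` if necessary, `L ≤ 0`. Since `x ⟂ y`, normalizing
`x + t y` divides it by `√(1 + t² ‖y‖²) > 1`, which yields feasible points arbitrarily close to `x`
at which `S` is at most `S x / √(1 + t² ‖y‖²)`. This is less than `S x`, because `S x > 0` for a
nonconstant `x` on a connected graph (`l1Var_pos`).
-/

open Matrix

/-- The ℓ¹ norm variation `S(x) = ∑_{1 ≤ i < j ≤ N} w_{ij} |x_i - x_j|` of a graph signal. -/
noncomputable def l1Var {N : ℕ} (W : Matrix (Fin N) (Fin N) ℝ) (x : Fin N → ℝ) : ℝ :=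
  ∑ i : Fin N, ∑ j : Fin N, if i < j then W i j * |x i - x j| else 0

open Filter Topology

lemma l1Var_smul {N : ℕ} (W : Matrix (Fin N) (Fin N) ℝ) (c : ℝ) (hc : 0 ≤ c) (x : Fin N → ℝ) :
    l1Var W (c • x) = c * l1Var W x := by
  unfold l1Var
  simp only [Finset.mul_sum, Pi.smul_apply, smul_eq_mul, ← mul_sub, abs_mul, abs_of_nonneg hc]
  refine Finset.sum_congr rfl fun i _ => Finset.sum_congr rfl fun j _ => ?_
  split_ifs <;> ring

/-- On a connected graph the variation vanishes only at constant signals. -/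
lemma l1Var_pos {N : ℕ} (W : Matrix (Fin N) (Fin N) ℝ)
    (hsymm : W.IsSymm) (hnonneg : ∀ i j, 0 ≤ W i j)
    (hconn : (SimpleGraph.fromRel fun i j : Fin N => 0 < W i j).Connected)
    (x : Fin N → ℝ) (hx : 1 < (Finset.univ.image x).card) : 0 < l1Var W x := by
  have hterm : ∀ i j : Fin N, 0 ≤ if i < j then W i j * |x i - x j| else 0 := fun i j => by
    split_ifs
    · exact mul_nonneg (hnonneg i j) (abs_nonneg _)
    · exact le_rfl
  by_contra hneg
  have h0 : l1Var W x = 0 :=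
    le_antisymm (not_lt.mp hneg) (Finset.sum_nonneg fun i _ => Finset.sum_nonneg fun j _ => hterm i j)
  have hzero : ∀ i j : Fin N, i < j → 0 < W i j → x i = x j := fun i j hij hW => by
    have h1 := (Finset.sum_eq_zero_iff_of_nonneg
      (fun i _ => Finset.sum_nonneg fun j _ => hterm i j)).mp h0 i (Finset.mem_univ _)
    have h2 := (Finset.sum_eq_zero_iff_of_nonneg (fun j _ => hterm i j)).mp h1 j (Finset.mem_univ _)
    rw [if_pos hij] at h2
    have h3 := (mul_eq_zero.mp h2).resolve_left hW.ne'
    exact sub_eq_zero.mp (abs_eq_zero.mp h3)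
  have hpos : ∀ i j : Fin N, 0 < W i j → x i = x j := fun i j hW => by
    rcases lt_trichotomy i j with h | h | h
    · exact hzero i j h hW
    · rw [h]
    · exact (hzero j i h (by rwa [hsymm.apply i j])).symm
  have hadj : ∀ i j, (SimpleGraph.fromRel fun i j : Fin N => 0 < W i j).Adj i j → x i = x j := by
    intro i j h
    rcases ((SimpleGraph.fromRel_adj _ _ _).mp h).2 with h | h
    · exact hpos i j h
    · exact (hpos j i h).symm
  have hconst : ∀ i j : Fin N, x i = x j := fun i j => by
    obtain ⟨p⟩ := hconn.preconnected i j
    induction p with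
    | nil => rfl
    | cons h _ ih => exact (hadj _ _ h).trans ih
  obtain ⟨a, ha, b, hb, hab⟩ := Finset.one_lt_card.mp hx
  obtain ⟨i, -, rfl⟩ := Finset.mem_image.mp ha
  obtain ⟨j, -, rfl⟩ := Finset.mem_image.mp hb
  exact hab (hconst i j)

/-- A dimension count: if `x` takes more than `m + 1` values, the vectors constant on its level
sets contain a nonzero solution of the `m + 1` equations `Uᵀ y = 0`, `⟨x, y⟩ = 0`. -/
lemma exists_direction {N m : ℕ} (U : Matrix (Fin N) (Fin m) ℝ) (x : Fin N → ℝ)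
    (hx : m + 1 < (Finset.univ.image x).card) :
    ∃ y : Fin N → ℝ, y ≠ 0 ∧ U.transpose.mulVec y = 0 ∧ x ⬝ᵥ y = 0 ∧
      ∀ i j, x i = x j → y i = y j := by
  let p : Fin N → (Finset.univ.image x) := fun i =>
    ⟨x i, Finset.mem_image_of_mem x (Finset.mem_univ i)⟩
  let E : ((Finset.univ.image x) → ℝ) →ₗ[ℝ] (Fin N → ℝ) := LinearMap.funLeft ℝ ℝ p
  have hp : Function.Surjective p := by
    rintro ⟨a, ha⟩
    obtain ⟨i, -, rfl⟩ := Finset.mem_image.mp ha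
    exact ⟨i, rfl⟩
  let T : (Fin N → ℝ) →ₗ[ℝ] (Fin m → ℝ) × ℝ := U.transpose.mulVecLin.prod (dotProductBilin ℝ ℝ x)
  have hker : LinearMap.ker (T ∘ₗ E) ≠ ⊥ := by
    apply LinearMap.ker_ne_bot_of_finrank_lt
    simpa using hx
  obtain ⟨g, hg, hg0⟩ := (Submodule.ne_bot_iff _).mp hker
  have hT : T (E g) = 0 := hg
  refine ⟨E g, fun h => hg0 ?_, congrArg Prod.fst hT, congrArg Prod.snd hT, fun i j hij => ?_⟩
  · exact LinearMap.funLeft_injective_of_surjective ℝ ℝ p hp (h.trans (map_zero E).symm)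
  · exact congrArg g (Subtype.ext hij)

/-- The slope at `x` of `t ↦ S (x + t y)`, for `y` constant on the level sets of `x`. -/
noncomputable def slopeVar {N : ℕ} (W : Matrix (Fin N) (Fin N) ℝ) (x y : Fin N → ℝ) : ℝ :=
  ∑ i : Fin N, ∑ j : Fin N, if i < j then W i j * (SignType.sign (x i - x j) * (y i - y j)) else 0

lemma slopeVar_neg {N : ℕ} (W : Matrix (Fin N) (Fin N) ℝ) (x y : Fin N → ℝ) :
    slopeVar W x (-y) = -slopeVar W x y := by
  unfold slopeVar
  simp only [← Finset.sum_neg_distrib, Pi.neg_apply]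
  refine Finset.sum_congr rfl fun i _ => Finset.sum_congr rfl fun j _ => ?_
  split_ifs <;> ring

/-- A small step along `y` does not change the sign of any difference `x i - x j`, and keeps equal
components equal, so every term of `S` is affine in `t`. -/
lemma eventually_l1Var_eq {N : ℕ} (W : Matrix (Fin N) (Fin N) ℝ) (x y : Fin N → ℝ)
    (hxy : ∀ i j, x i = x j → y i = y j) :
    ∀ᶠ t : ℝ in 𝓝 0, l1Var W (x + t • y) = l1Var W x + t * slopeVar W x y := by
  have key : ∀ᶠ t : ℝ in 𝓝 0, ∀ i j, |(x i + t * y i) - (x j + t * y j)| =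
      |x i - x j| + t * (SignType.sign (x i - x j) * (y i - y j)) := by
    refine eventually_all.mpr fun i => eventually_all.mpr fun j => ?_
    have hcont : Tendsto (fun t : ℝ => (x i + t * y i) - (x j + t * y j)) (𝓝 0) (𝓝 (x i - x j)) := by
      have : Continuous (fun t : ℝ => (x i + t * y i) - (x j + t * y j)) := by fun_prop
      simpa using this.tendsto 0
    rcases lt_trichotomy (x i - x j) 0 with h | h | h
    · filter_upwards [hcont.eventually_lt_const h] with t ht
      rw [abs_of_neg ht, abs_of_neg h, sign_neg h]
      rw [SignType.coe_neg_one]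
      ring
    · have h1 := sub_eq_zero.mp h
      filter_upwards with t
      simp [h1, hxy i j h1]
    · filter_upwards [hcont.eventually_const_lt h] with t ht
      rw [abs_of_pos ht, abs_of_pos h, sign_pos h]
      rw [SignType.coe_one]
      ring
  filter_upwards [key] with t ht
  unfold l1Var slopeVar
  simp only [Finset.mul_sum, ← Finset.sum_add_distrib, Pi.add_apply, Pi.smul_apply, smul_eq_mul, ht]
  refine Finset.sum_congr rfl fun i _ => Finset.sum_congr rfl fun j _ => ?_
  split_ifs <;> ring

/-- **Corollary 1.** Let `U ∈ ℝ^{N×(k-1)}` have rank `k-1` (`2 ≤ k ≤ N`) with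
first column `1/√N`.  If `x` is a local minimum of the ℓ¹ variation `S` on
`X_U = {x : Uᵀx = 0, ‖x‖ = 1}`, then the components of `x` take at most `k` different
values. -/
theorem local_min_at_most_k_values (N k : ℕ) (hk2 : 2 ≤ k) (hkN : k ≤ N)
    (W : Matrix (Fin N) (Fin N) ℝ)
    (hsymm : W.IsSymm) (hnonneg : ∀ i j, 0 ≤ W i j) (hdiag : ∀ i, W i i = 0)
    (hconn : (SimpleGraph.fromRel fun i j : Fin N => 0 < W i j).Connected)
    (U : Matrix (Fin N) (Fin (k - 1)) ℝ)
    (hrank : U.rank = k - 1)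
    (hcol : ∀ i, U i ⟨0, by omega⟩ = 1 / Real.sqrt N)
    (x : Fin N → ℝ)
    (hfeas : U.transpose.mulVec x = 0 ∧ Real.sqrt (∑ i, x i ^ 2) = 1)
    (hlocmin : ∃ ε > 0, ∀ x' : Fin N → ℝ,
      U.transpose.mulVec x' = 0 → Real.sqrt (∑ i, x' i ^ 2) = 1 →
      Real.sqrt (∑ i, (x' i - x i) ^ 2) < ε → l1Var W x ≤ l1Var W x') :
    (Finset.univ.image x).card ≤ k := by
  obtain ⟨ε, hε, hmin⟩ := hlocmin
  obtain ⟨hUx, hnorm⟩ := hfeas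
  by_contra hcard
  rw [not_le] at hcard
  have hSpos : 0 < l1Var W x := l1Var_pos W hsymm hnonneg hconn x (by omega)
  -- Passing to `-y` if needed, `S` does not increase to first order along `y`.
  obtain ⟨y, hy0, hUy, hxy, hlev, hL⟩ : ∃ y : Fin N → ℝ, y ≠ 0 ∧ U.transpose.mulVec y = 0 ∧
      x ⬝ᵥ y = 0 ∧ (∀ i j, x i = x j → y i = y j) ∧ slopeVar W x y ≤ 0 := by
    obtain ⟨y, hy0, hUy, hxy, hlev⟩ := exists_direction U x (by omega)
    rcases le_total (slopeVar W x y) 0 with h | h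
    · exact ⟨y, hy0, hUy, hxy, hlev, h⟩
    · exact ⟨-y, neg_ne_zero.mpr hy0, by rw [mulVec_neg, hUy, neg_zero],
        by rw [dotProduct_neg, hxy, neg_zero], fun i j hij => by simp [hlev i j hij],
        by rw [slopeVar_neg]; linarith⟩
  have hxx : ∑ i, x i ^ 2 = 1 := Real.sqrt_eq_one.mp hnorm
  set Y : ℝ := ∑ i, y i ^ 2 with hY
  have hYpos : 0 < Y := by
    obtain ⟨i, hi⟩ := Function.ne_iff.mp hy0
    exact Finset.sum_pos' (fun i _ => sq_nonneg _) ⟨i, Finset.mem_univ _, sq_pos_of_ne_zero hi⟩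
  have hsq : ∀ t : ℝ, ∑ i, (x i + t * y i) ^ 2 = 1 + t ^ 2 * Y := fun t => by
    have h1 : ∀ i, (x i + t * y i) ^ 2 = x i ^ 2 + 2 * t * (x i * y i) + t ^ 2 * y i ^ 2 :=
      fun i => by ring
    have h2 : ∑ i, x i * y i = 0 := hxy
    simp only [h1, Finset.sum_add_distrib, ← Finset.mul_sum, hxx, h2, ← hY]
    ring
  -- The normalizing factor of `x + t y`, in view of `hsq`.
  let c : ℝ → ℝ := fun t => (Real.sqrt (1 + t ^ 2 * Y))⁻¹
  have hrpos : ∀ t : ℝ, 0 < Real.sqrt (1 + t ^ 2 * Y) := fun t => Real.sqrt_pos.mpr (by positivity)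
  have hc : Continuous c := Continuous.inv₀ (by fun_prop) fun t => (hrpos t).ne'
  have hclose : ∀ᶠ t : ℝ in 𝓝 0, Real.sqrt (∑ i, ((c t • (x + t • y)) i - x i) ^ 2) < ε := by
    have hcont : Continuous fun t : ℝ => Real.sqrt (∑ i, ((c t • (x + t • y)) i - x i) ^ 2) := by
      simp only [Pi.add_apply, Pi.smul_apply, smul_eq_mul]
      fun_prop
    refine (hcont.tendsto 0).eventually_lt_const ?_
    simpa [c] using hε
  obtain ⟨t, ⟨ht1, ht2⟩, ht0⟩ := ((((eventually_l1Var_eq W x y hlev).and hclose).filter_mono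
    nhdsWithin_le_nhds).and (self_mem_nhdsWithin : Set.Ioi (0 : ℝ) ∈ 𝓝[>] 0)).exists
  have ht0 : 0 < t := ht0
  have hfeas : Real.sqrt (∑ i, (c t • (x + t • y)) i ^ 2) = 1 := by
    simp only [Pi.add_apply, Pi.smul_apply, smul_eq_mul, mul_pow, ← Finset.mul_sum, hsq, c, inv_pow]
    have h1 : 0 < 1 + t ^ 2 * Y := by positivity
    rw [Real.sq_sqrt h1.le, inv_mul_cancel₀ h1.ne', Real.sqrt_one]
  have hle := hmin (c t • (x + t • y))
    (by rw [mulVec_smul, mulVec_add, mulVec_smul, hUx, hUy]; simp) hfeas ht2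
  have hc0 : 0 < c t := inv_pos.mpr (hrpos t)
  have hc1 : c t < 1 := by
    refine inv_lt_one_of_one_lt₀ ?_
    rw [Real.lt_sqrt zero_le_one]
    have : 0 < t ^ 2 * Y := by positivity
    linarith
  rw [l1Var_smul W _ hc0.le, ht1] at hle
  have h1 : t * slopeVar W x y ≤ 0 := mul_nonpos_of_nonneg_of_nonpos ht0.le hL
  nlinarith [mul_nonpos_of_nonneg_of_nonpos hc0.le h1, mul_lt_mul_of_pos_right hc1 hSpos]
end

section
/- Let ũ_1,...,ũ_N be the greedy basis vectors of G, and for 2 ≤ k ≤ N let Ũ_{k−1} = [ũ_1,...,ũ_{k−1}]. Then ũ_k belongs to the set X*_{Ũ_{k−1}}; that is, ũ_k satisfies Ũ_{k−1}^⊤ ũ_k = 0, ‖ũ_k‖ = 1, and its partition matrix M satisfies dim ker(Ũ_{k−1}^⊤ M) = 1, so that ũ_k satisfies the necessary condition for a local minimum of the ℓ1 variation minimization problem P_{Ũ_{k−1}}. -/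
/-!
The argument is about the combinatorics of merging: each `τ j` is a partition of the vertices into
`j` groups (`IsGroupPartition.merge`, `isGroupPartition_tau`), and `τ l` refines `τ j` for `j ≤ l`
(`tau_refines`).

Write `A, B` for the groups merged at step `k`. The vector `ũ_k` is supported on `A ∪ B`, has sum
zero there, and has norm one by the choice of `t_k`. For `j < k` every group of `τ j` contains or
misses `A ∪ B`, so `ũ_k` has sum zero over every group of `τ j`; as `ũ_j` is a combination of
indicators of groups of `τ j`, it is orthogonal to `ũ_k`.

Conversely, a vector orthogonal to `ũ_1, ..., ũ_l` has sum zero over every group of `τ l`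
(`sum_eq_zero_of_orthogonal`): merging `A_j` and `B_j` loses one linear condition, which is recovered
from orthogonality to `ũ_j`. Let `z = M y` with `Ũ_{k-1}ᵀ z = 0`. Then `z` is constant on `A`, on `B`
and on the complement of `A ∪ B`, and has sum zero over `A ∪ B` and over all vertices. These two
equations force `z` to be a multiple of `ũ_k` (`eq_smul_of_sum_eq_zero`). Since every level is
attained, `M` is injective, so the kernel is the line spanned by the vector of levels of `ũ_k`.
-/

open Matrix

/-- `W(A,B) = ∑_{i ∈ A} ∑_{j ∈ B} w_{ij}`. -/
def WSum {N : ℕ} (W : Matrix (Fin N) (Fin N) ℝ) (A B : Finset (Fin N)) : ℝ :=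
  ∑ i ∈ A, ∑ j ∈ B, W i j

/-- The indicator vector `1_A ∈ ℝ^N` of `A ⊆ {1,...,N}`. -/
def indVec {N : ℕ} (A : Finset (Fin N)) : Fin N → ℝ := fun i => if i ∈ A then 1 else 0

/-- `M ∈ ℝ^{N×m}` is the partition matrix of `x ∈ ℝ^N`: its columns are the indicator
vectors of the level sets of `x`, ordered by increasing value, each value being attained. -/
def IsPartitionMatrixOf {N m : ℕ} (x : Fin N → ℝ) (M : Matrix (Fin N) (Fin m) ℝ) : Prop :=
  ∃ a : Fin m → ℝ, StrictMono a ∧ (∀ i, ∃ j, x i = a j) ∧ (∀ j, ∃ i, x i = a j) ∧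
    ∀ i j, M i j = if x i = a j then (1 : ℝ) else 0

/-- `σ` is a partition of `{1,...,N}` into exactly `k` nonempty groups. -/
structure IsGroupPartition {N : ℕ} (σ : Finset (Finset (Fin N))) (k : ℕ) : Prop where
  nonempty : ∀ S ∈ σ, S.Nonempty
  disjoint : ∀ S ∈ σ, ∀ T ∈ σ, S ≠ T → Disjoint S T
  cover : ∀ i, ∃ S ∈ σ, i ∈ S
  card : σ.card = k

lemma isGroupPartition_singletons (N : ℕ) :
    IsGroupPartition (Finset.univ.image (fun i : Fin N => ({i} : Finset (Fin N)))) N where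
  nonempty := by simp
  disjoint := by
    simp only [Finset.mem_image, Finset.mem_univ, true_and]
    rintro _ ⟨i, rfl⟩ _ ⟨j, rfl⟩ h
    simpa using h
  cover := fun i => ⟨{i}, by simp, by simp⟩
  card := by
    rw [Finset.card_image_of_injective _ Finset.singleton_injective]
    simp

lemma IsGroupPartition.merge {N k : ℕ} {σ : Finset (Finset (Fin N))} {A B : Finset (Fin N)}
    (h : IsGroupPartition σ (k + 1)) (hA : A ∈ σ) (hB : B ∈ σ) (hAB : A ≠ B) :
    IsGroupPartition (insert (A ∪ B) ((σ.erase A).erase B)) k where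
  nonempty := by
    intro S hS
    simp only [Finset.mem_insert, Finset.mem_erase] at hS
    rcases hS with rfl | hS
    · exact (h.nonempty A hA).mono Finset.subset_union_left
    · exact h.nonempty S hS.2.2
  disjoint := by
    have key : ∀ S ∈ (σ.erase A).erase B, Disjoint (A ∪ B) S := by
      intro S hS
      simp only [Finset.mem_erase] at hS
      rw [Finset.disjoint_union_left]
      exact ⟨h.disjoint A hA S hS.2.2 (Ne.symm hS.2.1), h.disjoint B hB S hS.2.2 (Ne.symm hS.1)⟩
    intro S hS T hT hST
    rw [Finset.mem_insert] at hS hT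
    rcases hS with rfl | hS <;> rcases hT with rfl | hT
    · exact absurd rfl hST
    · exact key T hT
    · exact (key S hS).symm
    · simp only [Finset.mem_erase] at hS hT
      exact h.disjoint S hS.2.2 T hT.2.2 hST
  cover := by
    intro i
    obtain ⟨S, hS, hi⟩ := h.cover i
    by_cases h1 : S = A
    · exact ⟨A ∪ B, by simp, by simp [← h1, hi]⟩
    by_cases h2 : S = B
    · exact ⟨A ∪ B, by simp, by simp [← h2, hi]⟩
    exact ⟨S, by simp [h1, h2, hS], hi⟩
  card := by
    have hnot : A ∪ B ∉ (σ.erase A).erase B := by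
      intro hm
      simp only [Finset.mem_erase] at hm
      -- a group of `σ` other than `A` is disjoint from `A`, but `A ∪ B` contains `A ≠ ∅`
      have hd := h.disjoint A hA _ hm.2.2 (Ne.symm hm.2.1)
      obtain ⟨i, hi⟩ := h.nonempty A hA
      exact Finset.disjoint_left.mp hd hi (Finset.mem_union_left _ hi)
    rw [Finset.card_insert_of_notMem hnot,
      Finset.card_erase_of_mem (Finset.mem_erase.mpr ⟨Ne.symm hAB, hB⟩),
      Finset.card_erase_of_mem hA, h.card]
    have : 1 < σ.card := Finset.one_lt_card.mpr ⟨A, hA, B, hB, hAB⟩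
    have := h.card
    omega

lemma IsGroupPartition.eq_singleton_univ {N : ℕ} {σ : Finset (Finset (Fin N))}
    (h : IsGroupPartition σ 1) : σ = {Finset.univ} := by
  obtain ⟨S, rfl⟩ := Finset.card_eq_one.mp h.card
  congr 1
  ext i
  obtain ⟨T, hT, hi⟩ := h.cover i
  rw [Finset.mem_singleton] at hT
  simp [← hT, hi]

section Greedy

variable {N : ℕ} {τ : ℕ → Finset (Finset (Fin N))} {A B : ℕ → Finset (Fin N)}

lemma isGroupPartition_tau
    (hτN : τ N = Finset.univ.image (fun i : Fin N => {i}))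
    (hmem : ∀ k', 2 ≤ k' → k' ≤ N → A k' ∈ τ k' ∧ B k' ∈ τ k' ∧ A k' ≠ B k')
    (hrec : ∀ k', 2 ≤ k' → k' ≤ N →
      τ (k' - 1) = insert (A k' ∪ B k') (((τ k').erase (A k')).erase (B k')))
    (d : ℕ) : ∀ j, 1 ≤ j → j + d = N → IsGroupPartition (τ j) j := by
  induction d with
  | zero =>
    intro j _ hj
    obtain rfl : N = j := hj.symm
    rw [hτN]
    exact isGroupPartition_singletons N
  | succ d ih =>
    intro j hj hjd
    have h1 := ih (j + 1) (by omega) (by omega)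
    have h2 := hmem (j + 1) (by omega) (by omega)
    have h3 := hrec (j + 1) (by omega) (by omega)
    rw [Nat.add_sub_cancel] at h3
    rw [h3]
    exact h1.merge h2.1 h2.2.1 h2.2.2

lemma tau_refines
    (hrec : ∀ k', 2 ≤ k' → k' ≤ N →
      τ (k' - 1) = insert (A k' ∪ B k') (((τ k').erase (A k')).erase (B k')))
    {j l : ℕ} (hj : 1 ≤ j) (hjl : j ≤ l) (hl : l ≤ N) :
    ∀ T ∈ τ l, ∃ S ∈ τ j, T ⊆ S := by
  induction l, hjl using Nat.le_induction with
  | base => exact fun T hT => ⟨T, hT, subset_rfl⟩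
  | succ l hjl ih =>
    intro T hT
    have h3 := hrec (l + 1) (by omega) hl
    rw [Nat.add_sub_cancel] at h3
    have : ∃ T' ∈ τ l, T ⊆ T' := by
      rw [h3]
      by_cases h1 : T = A (l + 1)
      · exact ⟨_, Finset.mem_insert_self _ _, h1 ▸ Finset.subset_union_left⟩
      by_cases h2 : T = B (l + 1)
      · exact ⟨_, Finset.mem_insert_self _ _, h2 ▸ Finset.subset_union_right⟩
      exact ⟨T, by simp [h1, h2, hT], subset_rfl⟩
    obtain ⟨T', hT', hTT'⟩ := this
    obtain ⟨S, hS, hS'⟩ := ih (by omega) T' hT'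
    exact ⟨S, hS, hTT'.trans hS'⟩

end Greedy

lemma sum_indVec_combination {N : ℕ} (A B : Finset (Fin N)) (a b : ℝ) (z : Fin N → ℝ) :
    ∑ i, (a * indVec A i + b * indVec B i) * z i = a * ∑ i ∈ A, z i + b * ∑ i ∈ B, z i := by
  simp [indVec, add_mul, Finset.sum_add_distrib, Finset.mul_sum, ite_mul,
    Finset.sum_ite_mem]

/-- A vector orthogonal to `ũ_1, ..., ũ_l` has sum zero over every group of `τ l`. -/
lemma sum_eq_zero_of_orthogonal {N : ℕ} {τ : ℕ → Finset (Finset (Fin N))}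
    {A B : ℕ → Finset (Fin N)} {t : ℕ → ℝ} {u : ℕ → Fin N → ℝ} {z : Fin N → ℝ} (hN : 1 ≤ N)
    (hpart : ∀ j, 1 ≤ j → j ≤ N → IsGroupPartition (τ j) j)
    (hmem : ∀ k', 2 ≤ k' → k' ≤ N → A k' ∈ τ k' ∧ B k' ∈ τ k' ∧ A k' ≠ B k')
    (hrec : ∀ k', 2 ≤ k' → k' ≤ N →
      τ (k' - 1) = insert (A k' ∪ B k') (((τ k').erase (A k')).erase (B k')))
    (htpos : ∀ k', 2 ≤ k' → k' ≤ N → 0 < t k')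
    (hu1 : u 1 = fun _ => 1 / Real.sqrt N)
    (huk : ∀ k', 2 ≤ k' → k' ≤ N → u k' = fun i =>
      (-(t k') * (B k').card) * indVec (A k') i + (t k' * (A k').card) * indVec (B k') i)
    {l : ℕ} (hl1 : 1 ≤ l) (hlN : l ≤ N)
    (hz : ∀ j, 1 ≤ j → j ≤ l → ∑ i, u j i * z i = 0) :
    ∀ S ∈ τ l, ∑ i ∈ S, z i = 0 := by
  induction l, hl1 using Nat.le_induction with
  | base =>
    have h := hz 1 le_rfl le_rfl
    rw [(hpart 1 le_rfl hlN).eq_singleton_univ]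
    intro S hS
    rw [Finset.mem_singleton] at hS
    subst hS
    rw [hu1, ← Finset.mul_sum] at h
    have hpos : (0 : ℝ) < N := by exact_mod_cast hN
    have : (1 / Real.sqrt N) ≠ 0 := by positivity
    exact (mul_eq_zero.mp h).resolve_left this
  | succ l hl ih =>
    have ih' := ih (by omega) (fun j h1 h2 => hz j h1 (by omega))
    obtain ⟨hA, hB, hAB⟩ := hmem (l + 1) (by omega) hlN
    have hp := hpart (l + 1) (by omega) hlN
    have h3 := hrec (l + 1) (by omega) hlN
    rw [Nat.add_sub_cancel] at h3
    have hun := ih' (A (l + 1) ∪ B (l + 1)) (by rw [h3]; exact Finset.mem_insert_self _ _)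
    rw [Finset.sum_union (hp.disjoint _ hA _ hB hAB)] at hun
    have ho := hz (l + 1) (by omega) le_rfl
    rw [huk (l + 1) (by omega) hlN, sum_indVec_combination] at ho
    have ht := htpos (l + 1) (by omega) hlN
    have ca : (0 : ℝ) < (A (l + 1)).card := by exact_mod_cast (hp.nonempty _ hA).card_pos
    have cb : (0 : ℝ) < (B (l + 1)).card := by exact_mod_cast (hp.nonempty _ hB).card_pos
    -- the sum condition and the orthogonality condition form an invertible system
    have hBz : ∑ i ∈ B (l + 1), z i = 0 := by
      have : (t (l + 1) * ((A (l + 1)).card + (B (l + 1)).card)) * ∑ i ∈ B (l + 1), z i = 0 := by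
        linear_combination ho + t (l + 1) * (B (l + 1)).card * hun
      exact (mul_eq_zero.mp this).resolve_left (by positivity)
    have hAz : ∑ i ∈ A (l + 1), z i = 0 := by rw [hBz, add_zero] at hun; exact hun
    intro S hS
    by_cases h1 : S = A (l + 1)
    · rw [h1, hAz]
    by_cases h2 : S = B (l + 1)
    · rw [h2, hBz]
    exact ih' S (by rw [h3]; simp [h1, h2, hS])

/-- A vector that is constant on the level sets of `v = -t|B| 1_A + t|A| 1_B` and has sum zero over
`A ∪ B` and over all indices is a multiple of `v`. -/
lemma eq_smul_of_sum_eq_zero {N : ℕ} {A B : Finset (Fin N)} {t : ℝ} {v z : Fin N → ℝ}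
    (hA : A.Nonempty) (hB : B.Nonempty) (hd : Disjoint A B) (ht : 0 < t)
    (hvA : ∀ i ∈ A, v i = -t * B.card) (hvB : ∀ i ∈ B, v i = t * A.card)
    (hv0 : ∀ i, i ∉ A ∪ B → v i = 0)
    (hz : ∀ i i', v i = v i' → z i = z i')
    (hAB : ∑ i ∈ A ∪ B, z i = 0) (huniv : ∑ i, z i = 0) :
    ∃ c : ℝ, z = c • v := by
  obtain ⟨a, ha⟩ := hA
  obtain ⟨b, hb⟩ := hB
  have ca : (0 : ℝ) < A.card := by exact_mod_cast Finset.card_pos.mpr ⟨a, ha⟩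
  have cb : (0 : ℝ) < B.card := by exact_mod_cast Finset.card_pos.mpr ⟨b, hb⟩
  have hzA : ∀ i ∈ A, z i = z a := fun i hi => hz _ _ (by rw [hvA i hi, hvA a ha])
  have hzB : ∀ i ∈ B, z i = z b := fun i hi => hz _ _ (by rw [hvB i hi, hvB b hb])
  have hz0 : ∀ i, i ∉ A ∪ B → z i = 0 := by
    intro i hi
    have hcompl : ∑ i ∈ (A ∪ B)ᶜ, z i = 0 := by
      have := Finset.sum_add_sum_compl (A ∪ B) z
      rw [hAB, huniv, zero_add] at this
      exact this
    rw [Finset.sum_congr rfl (fun j hj => hz j i (by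
      rw [hv0 i hi, hv0 j (Finset.mem_compl.mp hj)])), Finset.sum_const, nsmul_eq_mul] at hcompl
    have : (0 : ℝ) < ((A ∪ B)ᶜ).card := by
      exact_mod_cast Finset.card_pos.mpr ⟨i, Finset.mem_compl.mpr hi⟩
    exact (mul_eq_zero.mp hcompl).resolve_left this.ne'
  rw [Finset.sum_union hd, Finset.sum_congr rfl hzA, Finset.sum_congr rfl hzB,
    Finset.sum_const, Finset.sum_const, nsmul_eq_mul, nsmul_eq_mul] at hAB
  refine ⟨z b / (t * A.card), ?_⟩
  ext i
  rw [Pi.smul_apply, smul_eq_mul]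
  by_cases h1 : i ∈ A
  · rw [hzA i h1, hvA i h1]
    field_simp
    linear_combination hAB
  by_cases h2 : i ∈ B
  · rw [hzB i h2, hvB i h2]
    field_simp
  have h3 : i ∉ A ∪ B := by simp [h1, h2]
  rw [hz0 i h3, hv0 i h3, mul_zero]

set_option maxHeartbeats 1000000 in
/-- Let `ũ_1, ..., ũ_N` be the greedy basis vectors of `G` and
`Ũ_{k-1} = [ũ_1, ..., ũ_{k-1}]` for `2 ≤ k ≤ N`.  Then `ũ_k ∈ X*_{Ũ_{k-1}}`:
`Ũ_{k-1}ᵀ ũ_k = 0`, `‖ũ_k‖ = 1`, and the partition matrix `M = φ(ũ_k)` satisfies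
`dim ker (Ũ_{k-1}ᵀ M) = 1` together with `ũ_k ∈ span M`; i.e. `ũ_k` satisfies the
necessary condition for a local minimum of the ℓ¹ variation problem `P_{Ũ_{k-1}}`. -/
theorem greedy_vector_is_critical (N k : ℕ) (hk2 : 2 ≤ k) (hkN : k ≤ N)
    (W : Matrix (Fin N) (Fin N) ℝ)
    (hsymm : W.IsSymm) (hnonneg : ∀ i j, 0 ≤ W i j) (hdiag : ∀ i, W i i = 0)
    (τ : ℕ → Finset (Finset (Fin N)))
    (A B : ℕ → Finset (Fin N))
    (hτN : τ N = Finset.univ.image (fun i : Fin N => {i}))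
    (hmem : ∀ k', 2 ≤ k' → k' ≤ N → A k' ∈ τ k' ∧ B k' ∈ τ k' ∧ A k' ≠ B k')
    (hmax : ∀ k', 2 ≤ k' → k' ≤ N → ∀ A' ∈ τ k', ∀ B' ∈ τ k', A' ≠ B' →
      WSum W A' B' ≤ WSum W (A k') (B k'))
    (hrec : ∀ k', 2 ≤ k' → k' ≤ N →
      τ (k' - 1) = insert (A k' ∪ B k') (((τ k').erase (A k')).erase (B k')))
    (t : ℕ → ℝ)
    (ht : ∀ k', t k' = 1 / Real.sqrt (((A k').card : ℝ) * (B k').card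
      * ((A k').card + (B k').card)))
    (u : ℕ → Fin N → ℝ)
    (hu1 : u 1 = fun _ => 1 / Real.sqrt N)
    (huk : ∀ k', 2 ≤ k' → k' ≤ N → u k' = fun i =>
      (-(t k') * (B k').card) * indVec (A k') i + (t k' * (A k').card) * indVec (B k') i)
    (Uk : Matrix (Fin N) (Fin (k - 1)) ℝ)
    (hUk : ∀ i j, Uk i j = u (j.val + 1) i) :
    Uk.transpose.mulVec (u k) = 0 ∧
    Real.sqrt (∑ i, u k i ^ 2) = 1 ∧
    ∀ (m : ℕ) (M : Matrix (Fin N) (Fin m) ℝ), IsPartitionMatrixOf (u k) M →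
      Module.finrank ℝ (LinearMap.ker (Uk.transpose * M).mulVecLin) = 1 ∧
      ∃ y : Fin m → ℝ, u k = M.mulVec y := by
  have hpart : ∀ j, 1 ≤ j → j ≤ N → IsGroupPartition (τ j) j := fun j h1 h2 =>
    isGroupPartition_tau hτN hmem hrec (N - j) j h1 (by omega)
  have hcard : ∀ k', 2 ≤ k' → k' ≤ N →
      (0 : ℝ) < (A k').card ∧ (0 : ℝ) < (B k').card := by
    intro k' h1 h2
    obtain ⟨hA, hB, -⟩ := hmem k' h1 h2
    have hp := hpart k' (by omega) h2
    exact ⟨by exact_mod_cast (hp.nonempty _ hA).card_pos,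
      by exact_mod_cast (hp.nonempty _ hB).card_pos⟩
  have htpos : ∀ k', 2 ≤ k' → k' ≤ N → 0 < t k' := by
    intro k' h1 h2
    obtain ⟨ca, cb⟩ := hcard k' h1 h2
    rw [ht]
    positivity
  obtain ⟨hA, hB, hAB⟩ := hmem k hk2 hkN
  have hp := hpart k (by omega) hkN
  have hd := hp.disjoint _ hA _ hB hAB
  obtain ⟨ca, cb⟩ := hcard k hk2 hkN
  have htk := htpos k hk2 hkN
  have hukk := huk k hk2 hkN
  have hvA : ∀ i ∈ A k, u k i = -t k * (B k).card := by
    intro i hi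
    simp [hukk, indVec, hi, Finset.disjoint_left.mp hd hi]
  have hvB : ∀ i ∈ B k, u k i = t k * (A k).card := by
    intro i hi
    simp [hukk, indVec, hi, Finset.disjoint_right.mp hd hi]
  have hv0 : ∀ i, i ∉ A k ∪ B k → u k i = 0 := by
    intro i hi
    rw [Finset.mem_union, not_or] at hi
    simp [hukk, indVec, hi.1, hi.2]
  have hmergedMem : A k ∪ B k ∈ τ (k - 1) := by
    rw [hrec k hk2 hkN]
    exact Finset.mem_insert_self _ _
  have hsumAB : ∑ i ∈ A k ∪ B k, u k i = 0 := by
    rw [Finset.sum_union hd, Finset.sum_congr rfl hvA, Finset.sum_congr rfl hvB,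
      Finset.sum_const, Finset.sum_const, nsmul_eq_mul, nsmul_eq_mul]
    ring
  have hgroups : ∀ j, 1 ≤ j → j ≤ k - 1 → ∀ S ∈ τ j, ∑ i ∈ S, u k i = 0 := by
    intro j h1 h2 S hS
    obtain ⟨T, hT, hsub⟩ := tau_refines hrec h1 h2 (by omega) _ hmergedMem
    by_cases hST : S = T
    · rw [hST, ← hsumAB]
      exact (Finset.sum_subset hsub (fun i _ hi => hv0 i hi)).symm
    · have hdST := (hpart j h1 (by omega)).disjoint S hS T hT hST
      exact Finset.sum_eq_zero fun i hi =>
        hv0 i fun hi' => Finset.disjoint_left.mp hdST hi (hsub hi')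
  have horth : ∀ j, 1 ≤ j → j ≤ k - 1 → ∑ i, u j i * u k i = 0 := by
    intro j h1 h2
    rcases Nat.lt_or_ge 1 j with hj | hj
    · obtain ⟨hAj, hBj, -⟩ := hmem j hj (by omega)
      rw [huk j hj (by omega), sum_indVec_combination, hgroups j h1 h2 _ hAj,
        hgroups j h1 h2 _ hBj]
      ring
    · obtain rfl : j = 1 := by omega
      have hu := hgroups 1 h1 h2 Finset.univ (by
        rw [(hpart 1 le_rfl (by omega)).eq_singleton_univ]
        exact Finset.mem_singleton_self _)
      rw [hu1, ← Finset.mul_sum, hu, mul_zero]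
  have hUz : ∀ z : Fin N → ℝ, Uk.transpose.mulVec z = 0 ↔
      ∀ j, 1 ≤ j → j ≤ k - 1 → ∑ i, u j i * z i = 0 := by
    intro z
    constructor
    · intro h j h1 h2
      have := congrFun h ⟨j - 1, by omega⟩
      simpa [Matrix.mulVec, dotProduct, hUk, Nat.sub_add_cancel h1] using this
    · intro h
      ext j
      simpa [Matrix.mulVec, dotProduct, hUk] using h (j.val + 1) (by omega) (by omega)
  have hmain := (hUz (u k)).mpr horth
  have hnorm : ∑ i, u k i ^ 2 = 1 := by
    have h1 : ∑ i, u k i ^ 2 = ∑ i ∈ A k ∪ B k, u k i ^ 2 :=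
      (Finset.sum_subset (Finset.subset_univ _) (fun i _ hi => by simp [hv0 i hi])).symm
    rw [h1, Finset.sum_union hd, Finset.sum_congr rfl (fun i hi => by rw [hvA i hi]),
      Finset.sum_congr (s₁ := B k) rfl (fun i hi => by rw [hvB i hi]),
      Finset.sum_const, Finset.sum_const, nsmul_eq_mul, nsmul_eq_mul]
    have h2 : t k ^ 2 * (((A k).card : ℝ) * (B k).card * ((A k).card + (B k).card)) = 1 := by
      rw [ht, div_pow, Real.sq_sqrt (by positivity)]
      field_simp
    linear_combination h2
  refine ⟨hmain, by rw [hnorm, Real.sqrt_one], ?_⟩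
  rintro m M ⟨a, hmono, hex, hatt, hM⟩
  have hMy : ∀ (y : Fin m → ℝ) i j, u k i = a j → M.mulVec y i = y j := by
    intro y i j hij
    simp [Matrix.mulVec, dotProduct, hM, hij, hmono.injective.eq_iff]
  have hMa : M.mulVec a = u k := by
    ext i
    obtain ⟨j, hj⟩ := hex i
    rw [hMy a i j hj, hj]
  refine ⟨?_, a, hMa.symm⟩
  have ha0 : a ≠ 0 := by
    rintro rfl
    rw [Matrix.mulVec_zero] at hMa
    simp [← hMa] at hnorm
  have hker : LinearMap.ker (Uk.transpose * M).mulVecLin = Submodule.span ℝ {a} := by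
    ext y
    rw [LinearMap.mem_ker, Matrix.mulVecLin_apply, ← Matrix.mulVec_mulVec,
      Submodule.mem_span_singleton]
    constructor
    · intro hy
      have hs : ∀ j, 1 ≤ j → j ≤ k - 1 → ∀ S ∈ τ j, ∑ i ∈ S, M.mulVec y i = 0 :=
        fun j h1 h2 => sum_eq_zero_of_orthogonal (by omega) hpart hmem hrec htpos hu1 huk h1
          (by omega) fun j' h1' h2' => (hUz _).mp hy j' h1' (h2'.trans h2)
      obtain ⟨c, hc⟩ := eq_smul_of_sum_eq_zero (z := M.mulVec y) (hp.nonempty _ hA)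
        (hp.nonempty _ hB) hd htk hvA hvB hv0
        (by
          intro i i' hii'
          obtain ⟨j, hj⟩ := hex i
          rw [hMy y i j hj, hMy y i' j (hii' ▸ hj)])
        (hs (k - 1) (by omega) le_rfl _ hmergedMem)
        (hs 1 le_rfl (by omega) Finset.univ (by
          rw [(hpart 1 le_rfl (by omega)).eq_singleton_univ]
          exact Finset.mem_singleton_self _))
      refine ⟨c, ?_⟩
      ext j
      obtain ⟨i, hi⟩ := hatt j
      rw [← hMy y i j hi, hc, Pi.smul_apply, Pi.smul_apply, hi]
    · rintro ⟨c, rfl⟩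
      rw [Matrix.mulVec_smul, hMa, Matrix.mulVec_smul, hmain, smul_zero]
  rw [hker, finrank_span_singleton ha0]
end
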